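/- Let d ≥ 1 and let u, v ∈ ℝ^d be unit vectors. If g is a standard Gaussian random vector on ℝ^d (its law is the product over Fin d of the one-dimensional Gaussian measure with mean 0 and variance 1), then the probability of the event ⟨g, u⟩ · ⟨g, v⟩ < 0 equals arccos(⟨u, v⟩)/π. -/

import Mathlib

open MeasureTheory ProbabilityTheory

lemma aux_charFunDual {ι : Type*} [Fintype ι] (u v : ι → ℝ) (L : StrongDual ℝ (ℝ × ℝ)) :
    charFunDual ((Measure.pi fun _ : ι => gaussianReal 0 1).map
      (fun g => ((∑ j, g j * u j : ℝ), (∑ j, g j * v j : ℝ)))) L =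
    Complex.exp (((-((L (1, 0)) ^ 2 * (∑ j, u j * u j) + 2 * L (1, 0) * L (0, 1) *
      (∑ j, u j * v j) + (L (0, 1)) ^ 2 * (∑ j, v j * v j)) / 2 : ℝ)) : ℂ) := by
  have hL : ∀ x y : ℝ, L (x, y) = x * L (1, 0) + y * L (0, 1) := by
    intro x y
    have : ((x, y) : ℝ × ℝ) = x • ((1, 0) : ℝ × ℝ) + y • ((0, 1) : ℝ × ℝ) := by ext <;> simp
    rw [this, map_add, map_smul, map_smul]; simp
  rw [charFunDual_apply, integral_map (Measurable.aemeasurable (by fun_prop))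
    (Measurable.aestronglyMeasurable (by fun_prop))]
  have h1 : ∀ g : ι → ℝ, Complex.exp ((L ((∑ j, g j * u j : ℝ), (∑ j, g j * v j : ℝ)) : ℝ) *
      Complex.I) =
      ∏ j, Complex.exp (((u j * L (1, 0) + v j * L (0, 1) : ℝ) : ℂ) * (g j : ℂ) * Complex.I) := by
    intro g
    rw [← Complex.exp_sum, hL, ← Finset.sum_mul]
    congr 2
    rw [Finset.sum_mul, Finset.sum_mul, ← Finset.sum_add_distrib]
    push_cast
    exact Finset.sum_congr rfl fun j _ => by ring
  simp_rw [h1]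
  rw [integral_fintype_prod_eq_prod (f := fun j (x : ℝ) =>
    Complex.exp (((u j * L (1, 0) + v j * L (0, 1) : ℝ) : ℂ) * (x : ℂ) * Complex.I))]
  simp_rw [← charFun_apply_real, charFun_gaussianReal]
  rw [← Complex.exp_sum]
  congr 1
  rw [Finset.mul_sum, Finset.mul_sum, Finset.mul_sum, ← Finset.sum_add_distrib,
    ← Finset.sum_add_distrib, ← Finset.sum_neg_distrib, Finset.sum_div]
  push_cast
  exact Finset.sum_congr rfl fun j _ => by ring

lemma aux_map_eq {ι κ : Type*} [Fintype ι] [Fintype κ] (u v : ι → ℝ) (u' v' : κ → ℝ)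
    (h1 : ∑ j, u j * u j = ∑ j, u' j * u' j) (h2 : ∑ j, u j * v j = ∑ j, u' j * v' j)
    (h3 : ∑ j, v j * v j = ∑ j, v' j * v' j) :
    (Measure.pi fun _ : ι => gaussianReal 0 1).map
      (fun g => ((∑ j, g j * u j : ℝ), (∑ j, g j * v j : ℝ))) =
    (Measure.pi fun _ : κ => gaussianReal 0 1).map
      (fun g => ((∑ j, g j * u' j : ℝ), (∑ j, g j * v' j : ℝ))) := by
  have : IsProbabilityMeasure ((Measure.pi fun _ : ι => gaussianReal 0 1).map
      (fun g => ((∑ j, g j * u j : ℝ), (∑ j, g j * v j : ℝ)))) :=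
    Measure.isProbabilityMeasure_map (Measurable.aemeasurable (by fun_prop))
  have : IsProbabilityMeasure ((Measure.pi fun _ : κ => gaussianReal 0 1).map
      (fun g => ((∑ j, g j * u' j : ℝ), (∑ j, g j * v' j : ℝ)))) :=
    Measure.isProbabilityMeasure_map (Measurable.aemeasurable (by fun_prop))
  apply Measure.ext_of_charFunDual
  ext L
  rw [aux_charFunDual, aux_charFunDual, h1, h2, h3]

/-- radial factor -/
noncomputable def auxF (r : ℝ) : ENNReal :=
  ENNReal.ofReal r * ENNReal.ofReal ((2 * Real.pi)⁻¹ * Real.exp (-r ^ 2 / 2))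

lemma aux_polar (S : Set (ℝ × ℝ)) (hS : MeasurableSet S) (A : Set ℝ) (hA : MeasurableSet A)
    (h : ∀ r φ : ℝ, 0 < r → φ ∈ Set.Ioo (-Real.pi) Real.pi →
      ((r * Real.cos φ, r * Real.sin φ) ∈ S ↔ φ ∈ A)) :
    ((gaussianReal 0 1).prod (gaussianReal 0 1)) S =
      (∫⁻ r in Set.Ioi (0 : ℝ), auxF r) * volume (A ∩ Set.Ioo (-Real.pi) Real.pi) := by
  rw [gaussianReal_of_var_ne_zero 0 one_ne_zero,
    prod_withDensity (measurable_gaussianPDF 0 1) (measurable_gaussianPDF 0 1),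
    withDensity_apply _ hS, ← lintegral_indicator hS, ← Measure.volume_eq_prod,
    ← lintegral_comp_polarCoord_symm, polarCoord_target]
  have e : ∀ p ∈ Set.Ioi (0 : ℝ) ×ˢ Set.Ioo (-Real.pi) Real.pi,
      ENNReal.ofReal p.1 • S.indicator
        (fun z : ℝ × ℝ => gaussianPDF 0 1 z.1 * gaussianPDF 0 1 z.2) (polarCoord.symm p) =
      auxF p.1 * A.indicator 1 p.2 := by
    rintro ⟨r, φ⟩ ⟨hr, hφ⟩
    have hh := h r φ hr hφ
    simp only [polarCoord_symm_apply]
    by_cases hm : φ ∈ A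
    · rw [Set.indicator_of_mem hm, Set.indicator_of_mem (hh.2 hm)]
      simp only [gaussianPDF, gaussianPDFReal, auxF, smul_eq_mul, Pi.one_apply, mul_one]
      rw [← ENNReal.ofReal_mul (by positivity)]
      congr 2
      have hs : (√(2 * Real.pi * ((1 : NNReal) : ℝ)))⁻¹ * (√(2 * Real.pi * ((1 : NNReal) : ℝ)))⁻¹
          = (2 * Real.pi)⁻¹ := by
        rw [← mul_inv, Real.mul_self_sqrt (by positivity)]; simp
      rw [mul_mul_mul_comm, ← Real.exp_add]
      simp only [NNReal.coe_one, mul_one] at hs ⊢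
      rw [hs]
      congr 2
      have := Real.sin_sq_add_cos_sq φ
      linear_combination (-r ^ 2 / 2) * this
    · rw [Set.indicator_of_notMem hm, Set.indicator_of_notMem (fun q => hm (hh.1 q))]
      simp
  rw [setLIntegral_congr_fun (measurableSet_Ioi.prod measurableSet_Ioo) e,
    Measure.volume_eq_prod, ← Measure.prod_restrict,
    lintegral_prod_mul (f := auxF) (g := A.indicator 1) (by unfold auxF; fun_prop)
      ((measurable_one.indicator hA).aemeasurable),
    lintegral_indicator_one hA, Measure.restrict_apply hA]

lemma aux_const : (∫⁻ r in Set.Ioi (0 : ℝ), auxF r) * ENNReal.ofReal (2 * Real.pi) = 1 := by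
  have := aux_polar Set.univ MeasurableSet.univ Set.univ MeasurableSet.univ (by simp)
  rw [Set.univ_inter, Real.volume_Ioo, measure_univ] at this
  rw [this]; congr 2; ring

lemma aux_set (a : ℝ) (h0 : 0 ≤ a) (h1 : a ≤ Real.pi / 2) :
    {φ : ℝ | Real.cos (2 * a) < Real.cos (2 * φ)} ∩ Set.Ioo (-Real.pi) Real.pi =
      (Set.Ioo (-a) a ∪ Set.Ioo (-Real.pi) (a - Real.pi)) ∪ Set.Ioo (Real.pi - a) Real.pi := by
  have key : ∀ x, 0 ≤ x → x ≤ Real.pi / 2 → (Real.cos (2 * a) < Real.cos (2 * x) ↔ x < a) := by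
    intro x hx hx'
    rw [Real.strictAntiOn_cos.lt_iff_gt ⟨by linarith, by linarith⟩ ⟨by linarith, by linarith⟩]
    constructor <;> intro <;> linarith
  ext φ
  simp only [Set.mem_inter_iff, Set.mem_setOf_eq, Set.mem_Ioo, Set.mem_union]
  have c1 : Real.cos (2 * φ) = Real.cos (2 * (-φ)) := by rw [mul_neg, Real.cos_neg]
  have c2 : Real.cos (2 * φ) = Real.cos (2 * (φ + Real.pi)) := by
    rw [mul_add, Real.cos_add_two_pi]
  have c3 : Real.cos (2 * φ) = Real.cos (2 * (Real.pi - φ)) := by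
    rw [mul_sub, Real.cos_two_pi_sub]
  constructor
  · rintro ⟨h, h2, h3⟩
    rcases le_total 0 φ with p | p
    · rcases le_total φ (Real.pi / 2) with q | q
      · have := (key φ p q).1 h
        left; left; constructor <;> linarith
      · have := (key (Real.pi - φ) (by linarith) (by linarith)).1 (c3 ▸ h)
        right; constructor <;> linarith
    · rcases le_total (-φ) (Real.pi / 2) with q | q
      · have := (key (-φ) (by linarith) q).1 (c1 ▸ h)
        left; left; constructor <;> linarith
      · have := (key (φ + Real.pi) (by linarith) (by linarith)).1 (c2 ▸ h)
        left; right; constructor <;> linarith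
  · rintro ((⟨h, h'⟩ | ⟨h, h'⟩) | ⟨h, h'⟩)
    · refine ⟨?_, by linarith [Real.pi_pos], by linarith [Real.pi_pos]⟩
      rcases le_total 0 φ with p | p
      · exact (key φ p (by linarith)).2 h'
      · rw [c1]; exact (key (-φ) (by linarith) (by linarith)).2 (by linarith)
    · refine ⟨?_, by linarith, by linarith⟩
      rw [c2]; exact (key (φ + Real.pi) (by linarith) (by linarith)).2 (by linarith)
    · refine ⟨?_, by linarith, by linarith⟩
      rw [c3]; exact (key (Real.pi - φ) (by linarith) (by linarith)).2 (by linarith)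

lemma aux_vol (a : ℝ) (h0 : 0 ≤ a) (h1 : a ≤ Real.pi / 2) :
    volume ({φ : ℝ | Real.cos (2 * a) < Real.cos (2 * φ)} ∩ Set.Ioo (-Real.pi) Real.pi) =
      ENNReal.ofReal (4 * a) := by
  rw [aux_set a h0 h1, measure_union _ measurableSet_Ioo, measure_union _ measurableSet_Ioo,
    Real.volume_Ioo, Real.volume_Ioo, Real.volume_Ioo, ← ENNReal.ofReal_add (by linarith)
    (by linarith), ← ENNReal.ofReal_add (by linarith) (by linarith)]
  · congr 1; ring
  · rw [Set.disjoint_left]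
    rintro x ⟨h, h'⟩ ⟨h2, h3⟩
    linarith
  · rw [Set.disjoint_left]
    rintro x (⟨h, h'⟩ | ⟨h, h'⟩) ⟨h2, h3⟩ <;> linarith

/-- For unit vectors `u, v ∈ ℝ^d` and a standard Gaussian vector `g`,
the probability that `⟨g,u⟩ ⋅ ⟨g,v⟩ < 0` equals `arccos ⟨u,v⟩ / π`. -/
theorem gaussian_hyperplane_cut_probability (d : ℕ) (hd : 1 ≤ d)
    (u v : Fin d → ℝ) (hu : ∑ j, u j * u j = 1) (hv : ∑ j, v j * v j = 1) :
    (Measure.pi fun _ : Fin d => gaussianReal 0 1)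
        {g | (∑ j, g j * u j) * (∑ j, g j * v j) < 0} =
      ENNReal.ofReal (Real.arccos (∑ j, u j * v j) / Real.pi) := by
  have hcs : (∑ j, u j * v j) ^ 2 ≤ 1 := by
    have := Finset.sum_mul_sq_le_sq_mul_sq Finset.univ u v
    simp only [pow_two] at this ⊢
    rwa [hu, hv, one_mul] at this
  obtain ⟨hc1, hc2⟩ := abs_le.1 (abs_le_one_iff_mul_self_le_one.2 (by rwa [pow_two] at hcs))
  set c := ∑ j, u j * v j with hc
  set a := Real.arccos c / 2 with ha
  have ha0 : 0 ≤ a := by have := Real.arccos_nonneg c; positivity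
  have ha1 : a ≤ Real.pi / 2 := by have := Real.arccos_le_pi c; linarith
  have hcos : Real.cos (2 * a) = c := by
    rw [ha, mul_div_cancel₀ _ two_ne_zero, Real.cos_arccos hc1 hc2]
  have hsc := Real.sin_sq_add_cos_sq a
  set T : Set (ℝ × ℝ) := {p | p.1 * p.2 < 0} with hT
  have hTm : MeasurableSet T := measurableSet_lt (by fun_prop) (by fun_prop)
  have hmap := aux_map_eq u v ![Real.sin a, Real.cos a] ![-Real.sin a, Real.cos a]
    (by rw [hu]; simp; linarith) (by rw [← hc, ← hcos, Real.cos_two_mul]; simp; linarith)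
    (by rw [hv]; simp; linarith)
  have hm2 := congrArg (fun μ => μ T) hmap
  rw [Measure.map_apply (by fun_prop) hTm, Measure.map_apply (by fun_prop) hTm] at hm2
  refine hm2.trans ?_
  set S : Set (ℝ × ℝ) := {p | (p.1 * Real.sin a + p.2 * Real.cos a) *
    (p.1 * (-Real.sin a) + p.2 * Real.cos a) < 0} with hS
  have hSm : MeasurableSet S := measurableSet_lt (by fun_prop) (by fun_prop)
  have hmp := (measurePreserving_finTwoArrow (gaussianReal 0 1)).measure_preimage
    hSm.nullMeasurableSet
  have hpol := aux_polar S hSm {φ : ℝ | Real.cos (2 * a) < Real.cos (2 * φ)}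
    (measurableSet_lt (by fun_prop) (by fun_prop)) (by
      intro r φ hr _
      simp only [hS, Set.mem_setOf_eq]
      have h2 := Real.sin_sq_add_cos_sq φ
      have : (r * Real.cos φ * Real.sin a + r * Real.sin φ * Real.cos a) *
          (r * Real.cos φ * (-Real.sin a) + r * Real.sin φ * Real.cos a) =
          (r ^ 2 / 2) * (Real.cos (2 * a) - Real.cos (2 * φ)) := by
        rw [Real.cos_two_mul, Real.cos_two_mul]
        linear_combination r ^ 2 * (Real.cos a ^ 2 * h2 - Real.cos φ ^ 2 * hsc)
      rw [this, mul_neg_iff]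
      have : 0 < r ^ 2 / 2 := by positivity
      constructor
      · rintro (h | h) <;> linarith
      · intro h; left; constructor <;> linarith)
  have hpre : (fun g : Fin 2 → ℝ => ((∑ j, g j * (![Real.sin a, Real.cos a] : Fin 2 → ℝ) j : ℝ),
      (∑ j, g j * (![-Real.sin a, Real.cos a] : Fin 2 → ℝ) j : ℝ))) ⁻¹' T =
      MeasurableEquiv.finTwoArrow ⁻¹' S := by
    ext g
    simp [hT, hS, MeasurableEquiv.finTwoArrow, Fin.sum_univ_two]
  rw [hpre, hmp, hpol, aux_vol a ha0 ha1]
  have e : ENNReal.ofReal (4 * a) =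
      ENNReal.ofReal (2 * Real.pi) * ENNReal.ofReal (Real.arccos c / Real.pi) := by
    rw [← ENNReal.ofReal_mul (by positivity)]
    congr 1
    have := Real.pi_pos.ne'
    rw [ha]; field_simp; ring
  rw [e, ← mul_assoc, aux_const, one_mul]
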